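/- In type B_r: (a) for all 1 ≤ i ≤ j ≤ r, the single word w[i,i+1,…,j] belongs to 𝒰; (b) for all 1 ≤ j < k ≤ r, the element f = (q + q^{−1}) · w[1]·(w[2,3,…,j] * w[1,2,…,k]) belongs to 𝒰 (here w[2,…,j] is the empty word when j = 1, w[1]·(−) denotes left concatenation of the letter w[1] with every word occurring in the q-shuffle product), and the lexicographically largest word occurring in f is max(f) = w[1,2,…,j,1,2,…,k]. -/

import Mathlib

open scoped BigOperators

noncomputable section

/-- The field `ℚ(q)` of rational functions over `ℚ`. -/
abbrev K : Type := RatFunc ℚ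

/-- The indeterminate `q`. -/
abbrev qq : K := RatFunc.X

/-- Words on the alphabet `{w_1, …, w_r}` (the free monoid `M`). -/
abbrev Word (r : ℕ) := List (Fin r)

/-- The space `F` with basis the words, as finitely supported families of coefficients. -/
abbrev FA (r : ℕ) := Word r →₀ K

variable {r : ℕ}

/-- `(|w|, |x|)` : the symmetric bilinear form evaluated on the degrees of two words,
where `p i j = (α_i, α_j)` is the form on simple roots. -/
def pairW (p : Fin r → Fin r → ℤ) (w x : Word r) : ℤ :=
  (w.map fun i => (x.map fun j => p i j).sum).sum

/-- Auxiliary q-shuffle on *reversed* words: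
`shAux p w x` is the q-shuffle of `w.reverse` and `x.reverse`; it implements the recursion
`(w·a) * (x·b) = (w * (x·b))·a + q^{-(|w·a|,|b|)} ((w·a) * x)·b`, `w[] * x = x * w[] = x`. -/
def shAux (p : Fin r → Fin r → ℤ) : Word r → Word r → FA r
  | [], x => Finsupp.single x.reverse 1
  | w, [] => Finsupp.single w.reverse 1
  | a :: w, b :: x =>
      Finsupp.mapDomain (fun u => u ++ [a]) (shAux p w (b :: x))
      + (qq ^ (-(pairW p (a :: w) [b]))) •
          Finsupp.mapDomain (fun u => u ++ [b]) (shAux p (a :: w) x)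
  termination_by w x => w.length + x.length
  decreasing_by all_goals (first | (simp only [List.length_cons]; omega) | omega)

/-- The q-shuffle product `*` on `F`, extended bilinearly from words. -/
def shuffle (p : Fin r → Fin r → ℤ) (f g : FA r) : FA r :=
  f.sum fun w c => g.sum fun x d => (c * d) • shAux p w.reverse x.reverse

/-- Membership in `𝒰`, the `ℚ(q)`-subalgebra of `(F, *)` generated by the letters `w_i`. -/
inductive InU (p : Fin r → Fin r → ℤ) : FA r → Prop
  | letter (i : Fin r) : InU p (Finsupp.single [i] 1)
  | one : InU p (Finsupp.single ([] : Word r) 1)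
  | add : ∀ {f g : FA r}, InU p f → InU p g → InU p (f + g)
  | smul : ∀ (c : K) {f : FA r}, InU p f → InU p (c • f)
  | mul : ∀ {f g : FA r}, InU p f → InU p g → InU p (shuffle p f g)

/-- Lexicographic order on words (a proper left factor is smaller than the word). -/
def wlt (w x : Word r) : Prop := List.Lex (· < ·) w x

def wle (w x : Word r) : Prop := wlt w x ∨ w = x

/-- `g` is the lexicographically largest word occurring (with nonzero coefficient) in `f`. -/
def IsMaxWord (f : FA r) (g : Word r) : Prop :=
  f g ≠ 0 ∧ ∀ w ∈ f.support, wle w g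

/-- The Cartan matrix of type `B_r` (0-indexed; `α_1`, i.e. index `0`, is the short root):
`a_{ii} = 2`, `a_{12} = −2`, `a_{21} = −1`, `a_{i,i+1} = a_{i+1,i} = −1` for `i ≥ 2`,
and `a_{ij} = 0` for `|i−j| ≥ 2`. -/
def aB (r : ℕ) (i j : Fin r) : ℤ :=
  if i = j then 2
  else if (i : ℕ) = 0 ∧ (j : ℕ) = 1 then -2
  else if (i : ℕ) + 1 = (j : ℕ) ∨ (j : ℕ) + 1 = (i : ℕ) then -1
  else 0

/-- The symmetrizers of type `B_r`: `d_1 = 1`, `d_i = 2` for `i ≥ 2` (0-indexed). -/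
def dB (r : ℕ) (i : Fin r) : ℤ := if (i : ℕ) = 0 then 1 else 2

/-- The symmetric bilinear form `(α_i, α_j) = d_i a_{ij}` of type `B_r`. -/
def pB (r : ℕ) : Fin r → Fin r → ℤ := fun i j => dB r i * aB r i j

/-- The word `w[i+1, i+2, …, j+1]` (0-indexed run of consecutive letters `i, …, j`). -/
def run (r i j : ℕ) : List (Fin r) :=
  List.pmap (fun t ht => (⟨t, ht⟩ : Fin r))
    ((List.range r).filter fun t => decide (i ≤ t ∧ t ≤ j))
    (fun t ht => List.mem_range.mp (List.mem_of_mem_filter ht))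

/-!
Number the letters from `0`, let `R_j = w[0,…,j]` and `S_j = w[1,…,j]`, and let `β_j` be the degree
of `R_j`; these are the short positive roots, pairwise orthogonal and of square length `2`. A run is
a `q`-commutator of its first letter with the rest, which gives (a). For (b), expanding
`R_j * R_k - R_k * R_j` along first letters reduces
`R_j * R_k - R_k * R_j = (q² - q⁻²) w_0·(S_j * R_k)` for `j < k` to two relations straightening
`R_j * S_k` and `R_k * S_j`. These follow by induction, expanding along last letters; the recursion
closes up because the relations also hold, with modified powers of `q`, at `j = k`. The largest word
of `S_j * R_k` is the concatenation since every letter of `S_j` exceeds the first letter of `R_k`.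
-/

-- Instance search otherwise finds the `ℕ`-algebra structure of `ℚ(q)` through polynomials, which
-- `module` does not identify with the canonical one.
attribute [local instance] Semiring.toNatAlgebra Ring.toIntAlgebra

section QShuffle

/-- The q-shuffle product `w * x` of two words, in the order in which the words are read. -/
def shuffleWord (p : Fin r → Fin r → ℤ) (w x : Word r) : FA r := shAux p w.reverse x.reverse

/-- Left concatenation `f ↦ w_a·f` of a letter. -/
def consLetter (a : Fin r) : FA r →ₗ[K] FA r := Finsupp.lmapDomain K K fun u => a :: u

/-- Right concatenation `f ↦ f·w_a` of a letter. -/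
def snocLetter (a : Fin r) : FA r →ₗ[K] FA r := Finsupp.lmapDomain K K fun u => u ++ [a]

lemma consLetter_apply (a : Fin r) (f : FA r) :
    consLetter a f = Finsupp.mapDomain (fun u => a :: u) f := rfl

lemma consLetter_single (a : Fin r) (w : Word r) (c : K) :
    consLetter a (Finsupp.single w c) = Finsupp.single (a :: w) c :=
  Finsupp.mapDomain_single

lemma snocLetter_single (a : Fin r) (w : Word r) (c : K) :
    snocLetter a (Finsupp.single w c) = Finsupp.single (w ++ [a]) c :=
  Finsupp.mapDomain_single

lemma snocLetter_consLetter (a b : Fin r) (f : FA r) :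
    snocLetter a (consLetter b f) = consLetter b (snocLetter a f) := by
  simp only [snocLetter, consLetter, Finsupp.lmapDomain_apply, ← Finsupp.mapDomain_comp]
  rfl

lemma qq_ne_zero : qq ≠ 0 := RatFunc.X_ne_zero

variable (p : Fin r → Fin r → ℤ)

lemma pairW_singleton (a b : Fin r) : pairW p [a] [b] = p a b := by
  simp [pairW]

lemma pairW_append_left (u v x : Word r) : pairW p (u ++ v) x = pairW p u x + pairW p v x := by
  simp [pairW]

lemma pairW_append_right (w u v : Word r) : pairW p w (u ++ v) = pairW p w u + pairW p w v := by
  simp [pairW, List.sum_map_add]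

lemma pairW_cons_left (a : Fin r) (w x : Word r) :
    pairW p (a :: w) x = pairW p [a] x + pairW p w x :=
  pairW_append_left p [a] w x

lemma pairW_cons_right (w : Word r) (a : Fin r) (x : Word r) :
    pairW p w (a :: x) = pairW p w [a] + pairW p w x :=
  pairW_append_right p w [a] x

lemma pairW_reverse_left (w x : Word r) : pairW p w.reverse x = pairW p w x := by
  simp [pairW, List.sum_reverse]

lemma pairW_singleton_eq_zero {a : Fin r} {x : Word r} (h : ∀ b ∈ x, p a b = 0) :
    pairW p [a] x = 0 := by
  simpa [pairW] using List.sum_eq_zero (by simpa using h)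

lemma shuffle_single (w x : Word r) :
    shuffle p (Finsupp.single w 1) (Finsupp.single x 1) = shuffleWord p w x := by
  simp [shuffle, shuffleWord]

lemma shuffleWord_nil_left (x : Word r) : shuffleWord p [] x = Finsupp.single x 1 := by
  simp [shuffleWord, shAux]

lemma shuffleWord_nil_right (w : Word r) : shuffleWord p w [] = Finsupp.single w 1 := by
  induction w using List.reverseRecOn with
  | nil => exact shuffleWord_nil_left p []
  | append_singleton w a _ => simp [shuffleWord, shAux]

lemma shuffleWord_snoc_snoc (w x : Word r) (a b : Fin r) :
    shuffleWord p (w ++ [a]) (x ++ [b]) =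
      snocLetter a (shuffleWord p w (x ++ [b])) +
        qq ^ (-pairW p (w ++ [a]) [b]) • snocLetter b (shuffleWord p (w ++ [a]) x) := by
  rw [← pairW_reverse_left p (w ++ [a])]
  simp only [shuffleWord, List.reverse_append, List.reverse_singleton, List.singleton_append,
    snocLetter, Finsupp.lmapDomain_apply]
  rw [shAux]

lemma shuffleWord_singleton_cons (a b : Fin r) (x : Word r) :
    shuffleWord p [a] (b :: x) =
      qq ^ (-pairW p [a] (b :: x)) • Finsupp.single (a :: b :: x) 1 +
        consLetter b (shuffleWord p [a] x) := by
  induction x using List.reverseRecOn with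
  | nil =>
    have expand := shuffleWord_snoc_snoc p [] [] a b
    simp only [List.nil_append, shuffleWord_nil_left, shuffleWord_nil_right,
      snocLetter_single] at expand
    rw [expand, shuffleWord_nil_right, consLetter_single, add_comm]
    rfl
  | append_singleton x d ih =>
    have expand := shuffleWord_snoc_snoc p [] (b :: x) a d
    have expand_tail := shuffleWord_snoc_snoc p [] x a d
    simp only [List.nil_append, List.cons_append, shuffleWord_nil_left,
      snocLetter_single] at expand expand_tail
    have hpair : pairW p [a] (b :: (x ++ [d])) = pairW p [a] (b :: x) + pairW p [a] [d] :=
      pairW_append_right p [a] (b :: x) [d]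
    rw [expand, ih, expand_tail, hpair, neg_add, zpow_add₀ qq_ne_zero]
    simp only [map_add, map_smul, snocLetter_consLetter, snocLetter_single, consLetter_single,
      List.cons_append]
    module

lemma shuffleWord_cons_singleton (a b : Fin r) (w : Word r) :
    shuffleWord p (a :: w) [b] =
      qq ^ (-pairW p [a] [b]) • consLetter a (shuffleWord p w [b]) +
        Finsupp.single (b :: a :: w) 1 := by
  induction w using List.reverseRecOn with
  | nil => simp only [shuffleWord_singleton_cons, shuffleWord_nil_left, shuffleWord_nil_right,
      consLetter_single]
  | append_singleton w c ih =>
    have expand := shuffleWord_snoc_snoc p (a :: w) [] c b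
    have expand_tail := shuffleWord_snoc_snoc p w [] c b
    simp only [List.nil_append, List.cons_append, shuffleWord_nil_right,
      snocLetter_single] at expand expand_tail
    rw [expand, ih, expand_tail, pairW_cons_left p a (w ++ [c]), neg_add, zpow_add₀ qq_ne_zero]
    simp only [map_add, map_smul, snocLetter_consLetter, snocLetter_single, consLetter_single,
      List.cons_append]
    module

lemma shuffleWord_cons_cons (a b : Fin r) (w x : Word r) :
    shuffleWord p (a :: w) (b :: x) =
      qq ^ (-pairW p [a] (b :: x)) • consLetter a (shuffleWord p w (b :: x)) +
        consLetter b (shuffleWord p (a :: w) x) := by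
  induction w using List.reverseRecOn generalizing x with
  | nil => rw [shuffleWord_singleton_cons, shuffleWord_nil_left, consLetter_single]
  | append_singleton w c ihw =>
    induction x using List.reverseRecOn with
    | nil => rw [shuffleWord_cons_singleton, shuffleWord_nil_right, consLetter_single]
    | append_singleton x d ihx =>
      have expand := shuffleWord_snoc_snoc p (a :: w) (b :: x) c d
      have expand_left := shuffleWord_snoc_snoc p w (b :: x) c d
      have expand_right := shuffleWord_snoc_snoc p (a :: w) x c d
      simp only [List.cons_append] at expand expand_left expand_right ihx
      have hpair : pairW p [a] (b :: (x ++ [d])) = pairW p [a] (b :: x) + pairW p [a] [d] :=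
        pairW_append_right p [a] (b :: x) [d]
      rw [expand, ihw, ihx, expand_left, expand_right, hpair, pairW_cons_left p a (w ++ [c])]
      simp only [neg_add, zpow_add₀ qq_ne_zero, map_add, map_smul, snocLetter_consLetter]
      module

lemma shuffleWord_singleton_comm {a : Fin r} {x : Word r}
    (h : ∀ b ∈ x, p a b = 0 ∧ p b a = 0) : shuffleWord p [a] x = shuffleWord p x [a] := by
  induction x with
  | nil => rw [shuffleWord_nil_left, shuffleWord_nil_right]
  | cons b x ih =>
    have hax : pairW p [a] (b :: x) = 0 := pairW_singleton_eq_zero p fun c hc => (h c hc).1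
    have hba : pairW p [b] [a] = 0 := by rw [pairW_singleton, (h b List.mem_cons_self).2]
    rw [shuffleWord_singleton_cons, shuffleWord_cons_singleton, hax, hba,
      ih fun c hc => h c (List.mem_cons_of_mem b hc), neg_zero, zpow_zero]
    module

lemma shuffleWord_singleton_cons_of_orthogonal {a b : Fin r} {x : Word r} (hab : p b a = p a b)
    (h : ∀ c ∈ x, p a c = 0 ∧ p c a = 0) :
    shuffleWord p [a] (b :: x) =
      qq ^ p a b • shuffleWord p (b :: x) [a] +
        (qq ^ (-p a b) - qq ^ p a b) • Finsupp.single (a :: b :: x) 1 := by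
  have cancel : qq ^ p a b * qq ^ (-p a b) = 1 := by
    rw [← zpow_add₀ qq_ne_zero, add_neg_cancel, zpow_zero]
  rw [shuffleWord_singleton_cons, shuffleWord_cons_singleton, pairW_cons_right,
    pairW_singleton_eq_zero p fun c hc => (h c hc).1, add_zero, pairW_singleton, pairW_singleton,
    hab, shuffleWord_singleton_comm p h, smul_add, smul_smul, cancel]
  module

end QShuffle

section MaxWord

lemma wle.cons {u v : Word r} (a : Fin r) (h : wle u v) : wle (a :: u) (a :: v) :=
  h.imp List.Lex.cons (congrArg _)

lemma isMaxWord_single (w : Word r) : IsMaxWord (Finsupp.single w 1) w :=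
  ⟨by simp, fun u hu => Or.inr (by simpa using Finsupp.support_single_subset hu)⟩

namespace IsMaxWord

variable {f g : FA r} {w : Word r}

lemma smul {c : K} (hc : c ≠ 0) (hf : IsMaxWord f w) : IsMaxWord (c • f) w :=
  ⟨smul_ne_zero hc hf.1, fun u hu => hf.2 u (Finsupp.support_smul hu)⟩

lemma consLetter (a : Fin r) (hf : IsMaxWord f w) : IsMaxWord (consLetter a f) (a :: w) := by
  refine ⟨?_, fun u hu => ?_⟩
  · rw [consLetter_apply, Finsupp.mapDomain_apply List.cons_injective]
    exact hf.1
  · obtain ⟨v, hv, rfl⟩ := Finset.mem_image.mp (Finsupp.mapDomain_support hu)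
    exact (hf.2 v hv).cons a

lemma add_of_lt (hf : IsMaxWord f w) (hg : ∀ u ∈ g.support, wlt u w) : IsMaxWord (f + g) w := by
  have hgw : g w = 0 := by
    by_contra hw
    exact irrefl_of (List.Lex (· < ·)) w (hg w (Finsupp.mem_support_iff.mpr hw))
  refine ⟨by simpa [hgw] using hf.1, fun u hu => ?_⟩
  rcases Finset.mem_union.mp (Finsupp.support_add hu) with hu | hu
  · exact hf.2 u hu
  · exact Or.inl (hg u hu)

end IsMaxWord

lemma isMaxWord_shuffleWord_append (p : Fin r → Fin r → ℤ) {b : Fin r} {w : Word r}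
    (h : ∀ a ∈ w, b < a) (x : Word r) :
    IsMaxWord (shuffleWord p w (b :: x)) (w ++ b :: x) := by
  induction w with
  | nil =>
    rw [shuffleWord_nil_left]
    exact isMaxWord_single _
  | cons a w ih =>
    have ih := ih fun c hc => h c (List.mem_cons_of_mem a hc)
    rw [shuffleWord_cons_cons]
    refine ((ih.consLetter a).smul (zpow_ne_zero _ qq_ne_zero)).add_of_lt fun u hu => ?_
    obtain ⟨v, -, rfl⟩ := Finset.mem_image.mp (Finsupp.mapDomain_support hu)
    exact List.Lex.rel (h a List.mem_cons_self)

end MaxWord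

namespace InU

variable {p : Fin r → Fin r → ℤ} {f g : FA r} {w x : Word r}

lemma sub (hf : InU p f) (hg : InU p g) : InU p (f - g) := by
  rw [sub_eq_add_neg, ← neg_one_smul K g]
  exact hf.add (hg.smul (-1))

lemma of_smul {c : K} (hc : c ≠ 0) (h : InU p (c • f)) : InU p f := by
  rw [← inv_smul_smul₀ hc f]
  exact h.smul c⁻¹

lemma shuffleWord (hw : InU p (Finsupp.single w 1)) (hx : InU p (Finsupp.single x 1)) :
    InU p (shuffleWord p w x) := by
  rw [← shuffle_single]
  exact hw.mul hx

end InU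

section Run

lemma mem_run {i j : ℕ} {t : Fin r} : t ∈ run r i j ↔ i ≤ (t : ℕ) ∧ (t : ℕ) ≤ j := by
  simp only [run, List.mem_pmap, List.mem_filter, List.mem_range, decide_eq_true_eq]
  exact ⟨fun ⟨_, ⟨_, h⟩, ht⟩ => ht ▸ h, fun h => ⟨t, ⟨t.2, h⟩, rfl⟩⟩

lemma pairwise_lt_run (r i j : ℕ) : (run r i j).Pairwise (· < ·) :=
  (List.pairwise_lt_range.filter _).pmap _ fun _ _ _ _ h => h

lemma run_eq_nil {i j : ℕ} (h : j < i) : run r i j = [] := by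
  refine List.eq_nil_iff_forall_not_mem.mpr fun t ht => ?_
  rw [mem_run] at ht
  omega

lemma run_eq_cons {i j : ℕ} (hij : i ≤ j) (hj : j < r) :
    run r i j = ⟨i, hij.trans_lt hj⟩ :: run r (i + 1) j := by
  refine (pairwise_lt_run r i j).eq_of_mem_iff (List.pairwise_cons.mpr ⟨fun t ht => ?_,
    pairwise_lt_run r (i + 1) j⟩) fun t => ?_
  · exact (mem_run.mp ht).1
  · simp only [List.mem_cons, mem_run, Fin.ext_iff]
    omega

lemma run_succ_eq_snoc {i j : ℕ} (hij : i ≤ j + 1) (hj : j + 1 < r) :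
    run r i (j + 1) = run r i j ++ [⟨j + 1, hj⟩] := by
  refine (pairwise_lt_run r i (j + 1)).eq_of_mem_iff (List.pairwise_append.mpr
    ⟨pairwise_lt_run r i j, List.pairwise_singleton _ _, fun s hs t ht => ?_⟩) fun t => ?_
  · rw [List.mem_singleton.mp ht, Fin.lt_def]
    exact Nat.lt_succ_of_le (mem_run.mp hs).2
  · simp only [List.mem_append, List.mem_singleton, mem_run, Fin.ext_iff]
    omega

lemma run_self {i : ℕ} (hi : i < r) : run r i i = [⟨i, hi⟩] := by
  rw [run_eq_cons le_rfl hi, run_eq_nil i.lt_succ_self]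

end Run

section TypeB

local notation:70 w:70 "⧢" x:71 => shuffleWord (pB _) w x

local notation "δ" => (qq ^ (2 : ℤ) - qq ^ (-2 : ℤ))

lemma qq_sq_sub_ne_zero : δ ≠ 0 := by
  intro h
  have degrees := congrArg RatFunc.intDegree (sub_eq_zero.mp h)
  rw [zpow_neg, RatFunc.intDegree_inv, zpow_ofNat, pow_two,
    RatFunc.intDegree_mul qq_ne_zero qq_ne_zero, RatFunc.intDegree_X] at degrees
  omega

lemma qq_add_inv_ne_zero : qq + qq⁻¹ ≠ 0 := by
  intro h
  have degrees := congrArg RatFunc.intDegree (eq_neg_of_add_eq_zero_left h)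
  rw [RatFunc.intDegree_neg, RatFunc.intDegree_inv, RatFunc.intDegree_X] at degrees
  omega

lemma pB_apply (a b : Fin r) :
    pB r a b = if (a : ℕ) = b then if (a : ℕ) = 0 then 2 else 4
      else if (a : ℕ) + 1 = b ∨ (b : ℕ) + 1 = a then -2 else 0 := by
  simp only [pB, dB, aB, Fin.ext_iff]
  split_ifs <;> omega

/-- The inner product `(β_i, β_j)` of the short positive roots `β_i = α_1 + ⋯ + α_{i+1}`
(0-indexed, so that `β_i` is the degree of `run r 0 i`). -/
def shortRootPairing (i j : ℕ) : ℤ := if i = j then 2 else 0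

lemma shortRootPairing_self (i : ℕ) : shortRootPairing i i = 2 := if_pos rfl

lemma shortRootPairing_of_ne {i j : ℕ} (h : i ≠ j) : shortRootPairing i j = 0 := if_neg h

lemma shortRootPairing_one_succ (j : ℕ) : shortRootPairing 1 (j + 1) = shortRootPairing j 0 := by
  grind [shortRootPairing]

-- The degree of `run r i j` is `β_j - β_{i-1}` and that of the letter `k + 1` is `β_{k+1} - β_k`.
lemma pairW_run_succ {i j k : ℕ} (hij : i ≤ j) (hj : j < r) (hk : k + 1 < r) :
    pairW (pB r) (run r i j) [⟨k + 1, hk⟩] =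
      shortRootPairing j (k + 1) - shortRootPairing j k -
        (shortRootPairing i (k + 2) - shortRootPairing i (k + 1)) := by
  induction j, hij using Nat.le_induction with
  | base =>
    rw [run_self hj, pairW_singleton, pB_apply]
    simp only [shortRootPairing]
    grind
  | succ j hij ih =>
    rw [run_succ_eq_snoc (by omega) hj, pairW_append_left, ih (by omega), pairW_singleton, pB_apply]
    simp only [shortRootPairing]
    grind

lemma pairW_zero_run {k : ℕ} (hk : k < r) :
    pairW (pB r) [⟨0, by omega⟩] (run r 0 k) = shortRootPairing k 0 := by
  induction k with
  | zero =>
    rw [run_self hk, pairW_singleton, pB_apply]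
    rfl
  | succ k ih =>
    rw [run_succ_eq_snoc (by omega) hk, pairW_append_right, ih (by omega), pairW_singleton,
      pB_apply]
    simp only [shortRootPairing]
    grind

lemma singleton_shuffle_run {i j : ℕ} (hij : i < j) (hj : j < r) :
    [⟨i, by omega⟩] ⧢ run r (i + 1) j =
      qq ^ (-2 : ℤ) • (run r (i + 1) j ⧢ [⟨i, by omega⟩]) + δ • Finsupp.single (run r i j) 1 := by
  have adjacent : pB r ⟨i, by omega⟩ ⟨i + 1, by omega⟩ = -2 := by simp [pB_apply]
  have adjacent' : pB r ⟨i + 1, by omega⟩ ⟨i, by omega⟩ = -2 := by simp [pB_apply]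
  rw [run_eq_cons hij.le hj, run_eq_cons hij hj,
    shuffleWord_singleton_cons_of_orthogonal (pB r) (adjacent'.trans adjacent.symm), adjacent,
    neg_neg]
  intro c hc
  have := (mem_run.mp hc).1
  simp only [pB_apply]
  constructor <;> split_ifs <;> omega

lemma inU_single_run {i j : ℕ} (hij : i ≤ j) (hj : j < r) :
    InU (pB r) (Finsupp.single (run r i j) 1) := by
  induction hij using Nat.decreasingInduction with
  | self =>
    rw [run_self hj]
    exact InU.letter _
  | of_succ i hij ih =>
    have hi := InU.letter (p := pB r) ⟨i, hij.trans hj⟩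
    refine InU.of_smul qq_sq_sub_ne_zero ?_
    rw [← sub_eq_of_eq_add' (singleton_shuffle_run hij hj)]
    exact (hi.shuffleWord ih).sub ((ih.shuffleWord hi).smul _)

lemma run_shuffle_run_succ {i i' j k : ℕ} (hi : i ≤ j + 1) (hi' : i' ≤ k + 1) (hj : j + 1 < r)
    (hk : k + 1 < r) :
    run r i (j + 1) ⧢ run r i' (k + 1) =
      snocLetter ⟨j + 1, hj⟩ (run r i j ⧢ run r i' (k + 1)) +
        qq ^ (-(shortRootPairing (j + 1) (k + 1) - shortRootPairing (j + 1) k -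
            (shortRootPairing i (k + 2) - shortRootPairing i (k + 1)))) •
          snocLetter ⟨k + 1, hk⟩ (run r i (j + 1) ⧢ run r i' k) := by
  rw [← pairW_run_succ hi hj hk, run_succ_eq_snoc hi hj, run_succ_eq_snoc hi' hk,
    shuffleWord_snoc_snoc]

/-- The relations that straighten the products `run r 0 j * run r 1 k` and `run r 0 k * run r 1 j`,
for `j ≤ k`. The case `j = k` is included because the recursion on the last letters leads to it. -/
structure Straightening (r j k : ℕ) : Prop where
  crossing : run r 0 j ⧢ run r 1 k =
    qq ^ (-shortRootPairing j 0 - shortRootPairing j k) • (run r 1 k ⧢ run r 0 j) +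
      δ • (run r 1 j ⧢ run r 0 k)
  nested : run r 0 k ⧢ run r 1 j = qq ^ shortRootPairing j k • (run r 1 j ⧢ run r 0 k)

namespace Straightening

lemma zero_left {k : ℕ} (h0 : 0 < k) (hk : k < r) : Straightening r 0 k where
  crossing := by
    rw [run_self (by omega), singleton_shuffle_run h0 hk, run_eq_nil one_pos, shuffleWord_nil_left]
    simp [shortRootPairing, h0.ne]
  nested := by
    rw [run_eq_nil one_pos, shuffleWord_nil_left, shuffleWord_nil_right]
    simp [shortRootPairing, h0.ne]

lemma succ_self {j : ℕ} (hj : j + 1 < r) (h : Straightening r j (j + 1)) :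
    Straightening r (j + 1) (j + 1) := by
  have diagonal : run r 0 (j + 1) ⧢ run r 1 (j + 1) =
      qq ^ (2 : ℤ) • (run r 1 (j + 1) ⧢ run r 0 (j + 1)) := by
    rw [run_shuffle_run_succ (by omega) (by omega) hj hj,
      run_shuffle_run_succ (by omega) (by omega) hj hj, h.crossing, h.nested]
    simp (disch := omega) only [shortRootPairing_of_ne, shortRootPairing_self,
      shortRootPairing_one_succ, map_add, map_smul, smul_add, smul_smul, ← zpow_add₀ qq_ne_zero,
      zero_sub, sub_zero, sub_neg_eq_add, ← sub_eq_add_neg, sub_add_cancel_left, zpow_zero]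
    module
  constructor
  · rw [diagonal, shortRootPairing_self, shortRootPairing_of_ne j.succ_ne_zero, neg_zero, zero_sub]
    module
  · rw [diagonal, shortRootPairing_self]

lemma succ_succ {j m : ℕ} (hjm : j < m) (hm : m + 1 < r) (h : Straightening r j (m + 1))
    (h' : Straightening r (j + 1) m) : Straightening r (j + 1) (m + 1) := by
  have hj : j + 1 < r := by omega
  constructor
  · rw [run_shuffle_run_succ (by omega) (by omega) hj hm,
      run_shuffle_run_succ (by omega) (by omega) hm hj,
      run_shuffle_run_succ (by omega) (by omega) hj hm, h.crossing, h'.crossing]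
    simp (disch := omega) only [shortRootPairing_of_ne, shortRootPairing_one_succ, map_add,
      map_smul, smul_add, smul_smul, ← zpow_add₀ qq_ne_zero, neg_zero, zero_sub, sub_zero, neg_neg,
      add_neg_cancel, zpow_zero]
    module
  · rw [run_shuffle_run_succ (by omega) (by omega) hm hj,
      run_shuffle_run_succ (by omega) (by omega) hj hm, h.nested, h'.nested]
    simp (disch := omega) only [shortRootPairing_of_ne, map_smul, neg_zero, zero_sub, sub_zero,
      neg_neg, zpow_zero]
    module

end Straightening

lemma straightening {j k : ℕ} (hjk : j ≤ k) (h0 : 0 < k) (hk : k < r) : Straightening r j k := by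
  induction j generalizing k with
  | zero => exact .zero_left h0 hk
  | succ j ihj =>
    induction k, hjk using Nat.le_induction with
    | base => exact .succ_self hk (ihj j.le_succ h0 hk)
    | succ m hm ihk =>
      exact .succ_succ hm hk (ihj (by omega) h0 hk) (ihk (by omega) (by omega))

lemma run_shuffle_run_sub {j k : ℕ} (hjk : j < k) (hk : k < r) :
    run r 0 j ⧢ run r 0 k - run r 0 k ⧢ run r 0 j =
      δ • consLetter ⟨0, by omega⟩ (run r 1 j ⧢ run r 0 k) := by
  have hj : j < r := hjk.trans hk
  have rel := straightening hjk.le (by omega) hk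
  have expand_jk : run r 0 j ⧢ run r 0 k =
      consLetter ⟨0, by omega⟩ (run r 1 j ⧢ run r 0 k) +
        consLetter ⟨0, by omega⟩ (run r 0 j ⧢ run r 1 k) := by
    rw [run_eq_cons j.zero_le hj, run_eq_cons k.zero_le hk, shuffleWord_cons_cons,
      ← run_eq_cons k.zero_le hk, pairW_zero_run hk, shortRootPairing_of_ne (by omega), neg_zero,
      zpow_zero, one_smul]
  have expand_kj : run r 0 k ⧢ run r 0 j =
      qq ^ (-shortRootPairing j 0) • consLetter ⟨0, by omega⟩ (run r 1 k ⧢ run r 0 j) +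
        consLetter ⟨0, by omega⟩ (run r 0 k ⧢ run r 1 j) := by
    rw [run_eq_cons j.zero_le hj, run_eq_cons k.zero_le hk, shuffleWord_cons_cons,
      ← run_eq_cons j.zero_le hj, pairW_zero_run hj]
  rw [expand_jk, expand_kj, rel.crossing, rel.nested, shortRootPairing_of_ne hjk.ne, sub_zero,
    zpow_zero, one_smul, map_add, map_smul, map_smul]
  module

lemma inU_consLetter_run_shuffle_run {j k : ℕ} (hjk : j < k) (hk : k < r) :
    InU (pB r) (consLetter ⟨0, by omega⟩ (run r 1 j ⧢ run r 0 k)) := by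
  have hβj := inU_single_run j.zero_le (hjk.trans hk)
  have hβk := inU_single_run k.zero_le hk
  refine InU.of_smul qq_sq_sub_ne_zero ?_
  rw [← run_shuffle_run_sub hjk hk]
  exact (hβj.shuffleWord hβk).sub (hβk.shuffleWord hβj)

lemma isMaxWord_consLetter_run_shuffle_run {j k : ℕ} (hj : j < r) (hk : k < r) :
    IsMaxWord (consLetter ⟨0, by omega⟩ (run r 1 j ⧢ run r 0 k)) (run r 0 j ++ run r 0 k) := by
  have letters_pos : ∀ a ∈ run r 1 j, (⟨0, by omega⟩ : Fin r) < a := fun a ha => (mem_run.mp ha).1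
  rw [run_eq_cons j.zero_le hj, run_eq_cons k.zero_le hk]
  exact (isMaxWord_shuffleWord_append (pB r) letters_pos _).consLetter _

end TypeB

/-- Lemma 6.1 for type `B_r`: (a) each word `w[i, i+1, …, j]` (`1 ≤ i ≤ j ≤ r`) lies in
`𝒰`; (b) for `1 ≤ j < k ≤ r`, `f = (q+q^{-1}) · w[1]·(w[2,…,j] * w[1,…,k])` lies in `𝒰`
and its maximal word is `w[1,…,j,1,…,k]`. -/
theorem typeB_root_vectors (r : ℕ) (hr : 2 ≤ r) :
    (∀ i j : ℕ, 1 ≤ i → i ≤ j → j ≤ r →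
      InU (pB r) (Finsupp.single (run r (i - 1) (j - 1)) 1)) ∧
    (∀ j k : ℕ, 1 ≤ j → j < k → k ≤ r →
      InU (pB r)
        ((qq + qq⁻¹) •
          Finsupp.mapDomain (fun u : Word r => (⟨0, by omega⟩ : Fin r) :: u)
            (shuffle (pB r) (Finsupp.single (run r 1 (j - 1)) 1)
              (Finsupp.single (run r 0 (k - 1)) 1))) ∧
      IsMaxWord
        ((qq + qq⁻¹) •
          Finsupp.mapDomain (fun u : Word r => (⟨0, by omega⟩ : Fin r) :: u)
            (shuffle (pB r) (Finsupp.single (run r 1 (j - 1)) 1)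
              (Finsupp.single (run r 0 (k - 1)) 1)))
        (run r 0 (j - 1) ++ run r 0 (k - 1))) := by
  refine ⟨fun i j hi hij hj => inU_single_run (by omega) (by omega), fun j k hj hjk hk => ?_⟩
  rw [shuffle_single, ← consLetter_apply]
  exact ⟨(inU_consLetter_run_shuffle_run (by omega) (by omega)).smul _,
    (isMaxWord_consLetter_run_shuffle_run (by omega) (by omega)).smul qq_add_inv_ne_zero⟩
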